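/- Let u, v, w be affinely independent points in ℝ² and let Δ be the triangle (convex hull) with these vertices. Let β_u and β_v be angles with 0 < β_u ≤ ∠(w, u, v) and 0 < β_v ≤ ∠(w, v, u) and β_u + β_v < π, and let T be the triangle with edge [u, v] whose third vertex z lies strictly on the same side of the line through u and v as w, with ∠(z, u, v) = β_u and ∠(z, v, u) = β_v. Then T ⊆ Δ. -/

import Mathlib

/-!
Since `z` and `w` lie strictly on the same side of the line `uv`, one has
`z - u = s • (v - u) + t • (w - u)` with `t > 0`, and then also
`z - v = (1 - (s + t)) • (u - v) + t • (w - v)`. For independent `a`, `b` the angle between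
`b + k • a` and `a` is strictly decreasing in `k`, because angles add up in a parallelogram.
Hence the angle bound at `u` says `0 ≤ s` and the one at `v` says `0 ≤ 1 - (s + t)`: the
barycentric coordinates of `z` with respect to `u, v, w` are nonnegative.
-/

open InnerProductGeometry
open scoped Affine EuclideanGeometry

lemma linearIndependent_vsub_pair_of_notMem {𝕜 V P : Type*} [DivisionRing 𝕜] [AddCommGroup V]
    [Module 𝕜 V] [AddTorsor V P] {u v w : P} (huv : u ≠ v) (hw : w ∉ line[𝕜, u, v]) :
    LinearIndependent 𝕜 ![v -ᵥ u, w -ᵥ u] := by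
  refine (LinearIndependent.pair_iff' (vsub_ne_zero.2 huv.symm)).2 fun r hr => hw ?_
  rw [← vsub_vadd w u, ← hr]
  exact smul_vsub_vadd_mem_affineSpan_pair r u v

section OrderedField

variable {𝕜 V : Type*} [Field 𝕜] [LinearOrder 𝕜] [IsStrictOrderedRing 𝕜] [AddCommGroup V]
  [Module 𝕜 V]

lemma exists_pos_vsub_eq_smul_add_smul_of_sSameSide {P : Type*} [AddTorsor V P] {u v w z : P}
    (h : line[𝕜, u, v].SSameSide z w) :
    ∃ s t : 𝕜, 0 < t ∧ z -ᵥ u = s • (v -ᵥ u) + t • (w -ᵥ u) := by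
  have hu : u ∈ line[𝕜, u, v] := left_mem_affineSpan_pair 𝕜 u v
  obtain ⟨hz, hw, p, hp, hray⟩ := (AffineSubspace.sSameSide_iff_exists_left hu).1 h
  have hzu : z -ᵥ u ≠ 0 := vsub_ne_zero.2 (ne_of_mem_of_not_mem hu hz).symm
  have hwp : w -ᵥ p ≠ 0 := vsub_ne_zero.2 (ne_of_mem_of_not_mem hp hw).symm
  obtain ⟨t, ht, hzt⟩ := hray.symm.exists_pos_left hwp hzu
  obtain ⟨k, rfl⟩ := mem_affineSpan_pair_iff_exists_lineMap_eq.1 hp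
  refine ⟨-(t * k), t, ht, ?_⟩
  rw [← hzt, AffineMap.lineMap_apply, vsub_vadd_eq_vsub_sub]
  module

lemma mem_convexHull_triple_of_sub_eq {u v w z : V} {s t : 𝕜} (hs : 0 ≤ s) (ht : 0 ≤ t)
    (hst : s + t ≤ 1) (hz : z - u = s • (v - u) + t • (w - u)) :
    z ∈ convexHull 𝕜 {u, v, w} := by
  refine mem_convexHull_of_exists_fintype ![1 - (s + t), s, t] ![u, v, w] ?_ ?_ ?_ ?_
  · simp [Fin.forall_fin_succ, hs, ht, hst]
  · simp [Fin.sum_univ_three, add_assoc]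
  · simp [Fin.forall_fin_succ]
  · rw [← sub_add_cancel z u, hz]
    simp only [Fin.sum_univ_three, Matrix.cons_val]
    module

end OrderedField

section Angle

variable {V : Type*} [NormedAddCommGroup V] [InnerProductSpace ℝ V] {a b : V}

lemma angle_add_smul_lt_angle (hab : LinearIndependent ℝ ![a, b]) {k : ℝ} (hk : 0 < k) :
    angle (b + k • a) a < angle b a := by
  have hadd : angle b a = angle b (b + k • a) + angle (b + k • a) a := by
    have h := angle_eq_angle_add_add_angle_add b (smul_ne_zero hk.ne' (hab.ne_zero 0))
    rwa [Matrix.cons_val_zero, angle_smul_right_of_pos _ _ hk, angle_smul_left_of_pos _ _ hk,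
      angle_comm a] at h
  have hpos : 0 < angle b (b + k • a) := by
    refine (angle_nonneg _ _).lt_of_ne' fun h0 => ?_
    obtain ⟨-, r, -, hr⟩ := angle_eq_zero_iff.1 h0
    have hrel : k • a + (1 - r) • b = 0 := by
      rw [sub_smul, ← hr]
      module
    exact hk.ne' (LinearIndependent.pair_iff.1 hab _ _ hrel).1
  linarith

lemma strictAnti_angle_add_smul (hab : LinearIndependent ℝ ![a, b]) :
    StrictAnti fun k : ℝ => angle (b + k • a) a := by
  intro k l hkl
  have hind : LinearIndependent ℝ ![a, b + k • a] := by
    rwa [add_comm, LinearIndependent.pair_add_smul_right_iff]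
  have hlt := angle_add_smul_lt_angle hind (sub_pos.2 hkl)
  rwa [add_assoc, ← add_smul, add_sub_cancel] at hlt

lemma angle_smul_add_smul_le_angle_iff (hab : LinearIndependent ℝ ![a, b]) {s t : ℝ} (ht : 0 < t) :
    angle (s • a + t • b) a ≤ angle b a ↔ 0 ≤ s := by
  have hscale : s • a + t • b = t • (b + (s / t) • a) := by
    rw [smul_add, smul_smul, mul_div_cancel₀ s ht.ne', add_comm]
  have hanti : angle (b + (s / t) • a) a ≤ angle (b + (0 : ℝ) • a) a ↔ 0 ≤ s / t :=
    (strictAnti_angle_add_smul hab).le_iff_ge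
  rwa [zero_smul, add_zero, le_div_iff₀ ht, zero_mul, ← angle_smul_left_of_pos _ _ ht,
    ← hscale] at hanti

end Angle

theorem stmt18_general {V : Type*} [NormedAddCommGroup V] [InnerProductSpace ℝ V] {u v w z : V}
    (huv : u ≠ v) (hside : line[ℝ, u, v].SSameSide z w)
    (hu : ∠ z u v ≤ ∠ w u v) (hv : ∠ z v u ≤ ∠ w v u) :
    convexHull ℝ {u, v, z} ⊆ convexHull ℝ {u, v, w} := by
  obtain ⟨s, t, ht, hzu⟩ := exists_pos_vsub_eq_smul_add_smul_of_sSameSide hside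
  have hzv : z -ᵥ v = (1 - (s + t)) • (u -ᵥ v) + t • (w -ᵥ v) := by
    rw [← vsub_add_vsub_cancel z u v, hzu]
    simp only [vsub_eq_sub]
    module
  have hindu : LinearIndependent ℝ ![v -ᵥ u, w -ᵥ u] :=
    linearIndependent_vsub_pair_of_notMem huv hside.right_notMem
  have hindv : LinearIndependent ℝ ![u -ᵥ v, w -ᵥ v] :=
    linearIndependent_vsub_pair_of_notMem huv.symm (Set.pair_comm u v ▸ hside.right_notMem)
  have hs : 0 ≤ s := (angle_smul_add_smul_le_angle_iff hindu ht).1 (hzu ▸ hu)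
  have hst : 0 ≤ 1 - (s + t) := (angle_smul_add_smul_le_angle_iff hindv ht).1 (hzv ▸ hv)
  have hz : z ∈ convexHull ℝ {u, v, w} :=
    mem_convexHull_triple_of_sub_eq hs ht.le (sub_nonneg.1 hst) hzu
  refine convexHull_min ?_ (convex_convexHull ℝ _)
  rintro x (rfl | rfl | rfl)
  exacts [subset_convexHull ℝ _ (by simp), subset_convexHull ℝ _ (by simp), hz]

theorem stmt18 (u v w z : EuclideanSpace ℝ (Fin 2))
    (hind : AffineIndependent ℝ ![u, v, w])
    (βu βv : ℝ) (hβu0 : 0 < βu) (hβu : βu ≤ EuclideanGeometry.angle w u v)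
    (hβv0 : 0 < βv) (hβv : βv ≤ EuclideanGeometry.angle w v u)
    (hsum : βu + βv < Real.pi)
    (hside : (affineSpan ℝ ({u, v} : Set (EuclideanSpace ℝ (Fin 2)))).SSameSide z w)
    (hzu : EuclideanGeometry.angle z u v = βu)
    (hzv : EuclideanGeometry.angle z v u = βv) :
    (convexHull ℝ {u, v, z} : Set (EuclideanSpace ℝ (Fin 2))) ⊆
      convexHull ℝ {u, v, w} :=
  stmt18_general (hind.injective.ne (a₁ := 0) (a₂ := 1) (by decide)) hside (hzu.trans_le hβu)
    (hzv.trans_le hβv)
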